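/- If a localization pair A is fibrant in the model structure on Lp with componentwise Morita equivalences and the natural morphism η_A: A → Q(A) is a weak equivalence in that model structure, then A is Q-fibrant, i.e., the morphism from A to the terminal localization pair is a Q-fibration. -/

import Mathlib

open CategoryTheory Limits

universe w v u v' u'

namespace DGPaper

/-- A morphism `f` is a retract of a morphism `g`. -/
def IsRetract {C : Type u} [Category.{v} C] {X Y X' Y' : C}
    (f : X ⟶ Y) (g : X' ⟶ Y') : Prop :=
  ∃ (i : X ⟶ X') (r : X' ⟶ X) (i' : Y ⟶ Y') (r' : Y' ⟶ Y),
    i ≫ r = 𝟙 X ∧ i' ≫ r' = 𝟙 Y ∧ i ≫ g = f ≫ i' ∧ r ≫ f = g ≫ r'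

/-- A (Quillen) model structure on a category `C`: classes of weak equivalences,
fibrations and cofibrations, satisfying two-out-of-three, closure under retracts,
the lifting axioms and the factorization axioms. -/
structure ModelStructure (C : Type u) [Category.{v} C] where
  weq : MorphismProperty C
  fib : MorphismProperty C
  cof : MorphismProperty C
  weq_comp : ∀ {X Y Z : C} (f : X ⟶ Y) (g : Y ⟶ Z), weq f → weq g → weq (f ≫ g)
  weq_cancel_left : ∀ {X Y Z : C} (f : X ⟶ Y) (g : Y ⟶ Z), weq f → weq (f ≫ g) → weq g
  weq_cancel_right : ∀ {X Y Z : C} (f : X ⟶ Y) (g : Y ⟶ Z), weq g → weq (f ≫ g) → weq f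
  weq_retract : ∀ {X Y X' Y' : C} (f : X ⟶ Y) (g : X' ⟶ Y'),
    IsRetract f g → weq g → weq f
  fib_retract : ∀ {X Y X' Y' : C} (f : X ⟶ Y) (g : X' ⟶ Y'),
    IsRetract f g → fib g → fib f
  cof_retract : ∀ {X Y X' Y' : C} (f : X ⟶ Y) (g : X' ⟶ Y'),
    IsRetract f g → cof g → cof f
  lift_trivCof_fib : ∀ {A B X Y : C} (i : A ⟶ B) (p : X ⟶ Y),
    cof i → weq i → fib p → HasLiftingProperty i p
  lift_cof_trivFib : ∀ {A B X Y : C} (i : A ⟶ B) (p : X ⟶ Y),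
    cof i → fib p → weq p → HasLiftingProperty i p
  fact_trivCof_fib : ∀ {X Y : C} (f : X ⟶ Y),
    ∃ (Z : C) (i : X ⟶ Z) (p : Z ⟶ Y), cof i ∧ weq i ∧ fib p ∧ i ≫ p = f
  fact_cof_trivFib : ∀ {X Y : C} (f : X ⟶ Y),
    ∃ (Z : C) (i : X ⟶ Z) (p : Z ⟶ Y), cof i ∧ fib p ∧ weq p ∧ i ≫ p = f

variable {C : Type u} [Category.{v} C]

/-- Morphisms having the right lifting property with respect to every morphism in `P`. -/
def rlp (P : MorphismProperty C) : MorphismProperty C :=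
  fun _ _ p => ∀ ⦃A B : C⦄ (i : A ⟶ B), P i → HasLiftingProperty i p

/-- Morphisms having the left lifting property with respect to every morphism in `P`. -/
def llp (P : MorphismProperty C) : MorphismProperty C :=
  fun _ _ i => ∀ ⦃X Y : C⦄ (p : X ⟶ Y), P p → HasLiftingProperty i p

/-- The union of two classes of morphisms. -/
def mpUnion (P Q : MorphismProperty C) : MorphismProperty C :=
  fun _ _ f => P f ∨ Q f

/-- The class of morphisms consisting of the single morphism `f`. -/
def mpSingleton {X Y : C} (f : X ⟶ Y) : MorphismProperty C :=
  fun A B g => ∃ (_ : A = X) (_ : B = Y), HEq g f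

/-- `M` is cofibrantly generated, with set of generating cofibrations `I` and set of
generating trivial cofibrations `J`: the fibrations are the morphisms with the right
lifting property with respect to `J`, the trivial fibrations are the morphisms with
the right lifting property with respect to `I`, and the (trivial) cofibrations are
generated accordingly. -/
structure IsCofibrantlyGenerated (M : ModelStructure C) (I J : MorphismProperty C) : Prop where
  fib_eq : M.fib = rlp J
  trivFib_eq : (fun _ _ f => M.fib f ∧ M.weq f : MorphismProperty C) = rlp I
  cof_eq : M.cof = llp (rlp I)
  trivCof_eq : (fun _ _ f => M.cof f ∧ M.weq f : MorphismProperty C) = llp (rlp J)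

/-- An object is fibrant if the morphism to the terminal object is a fibration. -/
def Fibrant (M : ModelStructure C) [HasTerminal C] (X : C) : Prop :=
  M.fib (terminal.from X)

/-- An object is cofibrant if the morphism from the initial object is a cofibration. -/
def Cofibrant (M : ModelStructure C) [HasInitial C] (X : C) : Prop :=
  M.cof (initial.to X)

/-- The `Q`-weak equivalences of localization pairs: the morphisms sent by the
dg quotient functor `Q` to weak equivalences. -/
def QWeq {Lp : Type u'} [Category.{v'} Lp] (M : ModelStructure Lp) (Q : Lp ⥤ Lp) :
    MorphismProperty Lp :=
  fun _ _ f => M.weq (Q.map f)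

/-- The `Q`-fibrations: morphisms with the right lifting property with respect to
all cofibrations which are `Q`-weak equivalences. -/
def QFib {Lp : Type u'} [Category.{v'} Lp] (M : ModelStructure Lp) (Q : Lp ⥤ Lp) :
    MorphismProperty Lp :=
  fun _ _ p => ∀ ⦃A B : Lp⦄ (i : A ⟶ B), M.cof i → QWeq M Q i → HasLiftingProperty i p


/-- A map into a fibrant object extends along a trivial cofibration. -/
theorem ModelStructure.exists_extension_of_trivCof (M : ModelStructure C) [HasTerminal C]
    {X Y A : C} (i : X ⟶ Y) (hi : M.cof i) (hw : M.weq i) (hA : Fibrant M A) (f : X ⟶ A) :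
    ∃ g : Y ⟶ A, i ≫ g = f := by
  have := M.lift_trivCof_fib i _ hi hw hA
  have sq : CommSq f i (terminal.from A) (terminal.from Y) := ⟨Subsingleton.elim _ _⟩
  exact ⟨sq.lift, sq.fac_left⟩

/-- Given a cofibration `i : X ⟶ Y` and a weak equivalence `w : S ⟶ T`, a commutative square
from `i` to `w` can be lifted after replacing `S` by an object `Z` along a trivial
cofibration `S ⟶ Z`. -/
theorem ModelStructure.exists_lift_of_weq (M : ModelStructure C)
    {X Y S T : C} (i : X ⟶ Y) (hi : M.cof i) (w : S ⟶ T) (hw : M.weq w)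
    (a : X ⟶ S) (b : Y ⟶ T) (h : a ≫ w = i ≫ b) :
    ∃ (Z : C) (j : S ⟶ Z) (l : Y ⟶ Z), M.cof j ∧ M.weq j ∧ i ≫ l = a ≫ j := by
  obtain ⟨Z, j, p, hj, hjw, hp, hjp⟩ := M.fact_trivCof_fib w
  have hpw : M.weq p := M.weq_cancel_left j p hjw (hjp ▸ hw)
  have := M.lift_cof_trivFib i p hi hp hpw
  have sq : CommSq (a ≫ j) i p b := ⟨by rw [Category.assoc, hjp, h]⟩
  exact ⟨Z, j, sq.lift, hj, hjw, sq.fac_left⟩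

/-- Given a commutative square from a cofibration `i : X ⟶ Y` to a weak equivalence with
source `S`, every composite `X ⟶ S ⟶ A` with `A` fibrant extends along `i`. -/
theorem ModelStructure.exists_extension_of_weq (M : ModelStructure C) [HasTerminal C]
    {X Y S T A : C} (i : X ⟶ Y) (hi : M.cof i) (w : S ⟶ T) (hw : M.weq w)
    (a : X ⟶ S) (b : Y ⟶ T) (h : a ≫ w = i ≫ b) (hA : Fibrant M A) (f : S ⟶ A) :
    ∃ g : Y ⟶ A, i ≫ g = a ≫ f := by
  obtain ⟨Z, j, l, hj, hjw, hl⟩ := M.exists_lift_of_weq i hi w hw a b h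
  obtain ⟨r, hr⟩ := M.exists_extension_of_trivCof j hj hjw hA f
  exact ⟨l ≫ r, by rw [← Category.assoc, hl, Category.assoc, hr]⟩

/-- If a localization pair `A` is fibrant in the model structure on
`Lp` with componentwise Morita equivalences and the natural morphism `η_A : A ⟶ Q(A)`
is a weak equivalence in that model structure, then `A` is `Q`-fibrant, i.e. the
morphism from `A` to the terminal localization pair is a `Q`-fibration. -/
theorem statement11
    -- the category of small dg categories over the field `k`, and its Morita equivalences
    (dgcat : Type u) [Category.{v} dgcat]
    (MoritaEq : MorphismProperty dgcat)
    -- the category `Lp` of localization pairs, with the two evaluation functors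
    (Lp : Type u') [Category.{v'} Lp] [HasTerminal Lp]
    (Ev0 Ev1 : Lp ⥤ dgcat)
    -- the model structure on `Lp` with componentwise Morita equivalences
    (M : ModelStructure Lp)
    (hweq : ∀ {A B : Lp} (f : A ⟶ B),
      M.weq f ↔ MoritaEq (Ev0.map f) ∧ MoritaEq (Ev1.map f))
    -- the Drinfeld dg quotient functor `Q : Lp ⥤ Lp` with its natural morphism
    -- `η_A : A ⟶ Q(A)`
    (Q : Lp ⥤ Lp) (η : 𝟭 Lp ⟶ Q)
    -- a fibrant localization pair `A` such that `η_A` is a weak equivalence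
    (A : Lp) (hA : Fibrant M A) (hηA : M.weq (η.app A)) :
    QFib M Q (terminal.from A) := by
  intro X Y i hi hQi
  refine ⟨fun {f g} _ => ?_⟩
  obtain ⟨R, ρ, p, -, hρ, hR, -⟩ := M.fact_trivCof_fib (terminal.from (Q.obj A))
  have hR : Fibrant M R := by
    rwa [Fibrant, Subsingleton.elim (terminal.from R) p]
  obtain ⟨b, hb⟩ := M.exists_extension_of_weq i hi (Q.map i) hQi (η.app X) (η.app Y)
    (η.naturality i).symm hR (Q.map f ≫ ρ)
  have hf : f ≫ η.app A ≫ ρ = i ≫ b := by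
    rw [hb]
    simpa using (η.naturality f =≫ ρ)
  obtain ⟨l, hl⟩ := M.exists_extension_of_weq i hi (η.app A ≫ ρ)
    (M.weq_comp _ _ hηA hρ) f b hf hA (𝟙 A)
  exact ⟨⟨⟨l, hl.trans (Category.comp_id f), Subsingleton.elim _ _⟩⟩⟩
end DGPaper
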